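/- arXiv:1901.04921 — 4 statements merged into one kernel-verified Lean document; each statement's English description precedes it below -/
import Mathlib

section
/- Let T ∈ ℝ^{n×⋯×n} be a t-tensor. Then ‖T‖_cb equals the supremum, over all d ∈ ℕ, unit vectors u ∈ ℝ^d, and families of unit vectors {v_i}_{i ∈ [n]^t} in ℝ^d satisfying the Gram condition (for every ℓ ∈ [t−1], all prefixes i, i' ∈ [n]^ℓ and all suffixes j, k ∈ [n]^{t−ℓ}: ⟨v_{i·j}, v_{i·k}⟩ = ⟨v_{i'·j}, v_{i'·k}⟩), of the quantity Σ_{i ∈ [n]^t} T_i ⟨u, v_i⟩. -/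
/-!
Given orthogonal `U_j(i)` and a unit vector `w`, the vectors `v_i = U_1(i_1) ⋯ U_t(i_t) w` are unit
vectors satisfying the Gram condition, since a common prefix of the product is orthogonal and
cancels (`gramInvariant_prodU`). With `A = ∑ T_i U_1(i_1) ⋯ U_t(i_t)` one has
`⟨u, A w⟩ = ∑ T_i ⟨u, v_i⟩`, so `‖A‖` is bounded by the supremum over vector families.

Conversely, every family of unit vectors with the Gram condition arises this way
(`exists_prodU_of_gramInvariant`), because families with equal Gram matrices are related by an
isometry (`exists_linearIsometry_of_inner_eq`). Then `∑ T_i ⟨u, v_i⟩ = ⟨u, A w⟩ ≤ ‖A‖`.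
Both suprema are over nonempty sets bounded by `∑ |T_i|`, so they are genuine.
-/

open Matrix

/-- Concatenation of a tuple in `[n]^ℓ` with a tuple in `[n]^m`, viewed as a tuple in `[n]^t`
via the identity `ℓ + m = t`. -/
def tapp {n ℓ m t : ℕ} (h : ℓ + m = t) (i : Fin ℓ → Fin n) (j : Fin m → Fin n) :
    Fin t → Fin n :=
  fun q => Fin.append i j (Fin.cast h.symm q)

/-- The ordered matrix product `U 0 (i 0) * U 1 (i 1) * ⋯ * U (t-1) (i (t-1))`. -/
def prodU {n t d : ℕ} (U : Fin t → Fin n → Matrix (Fin d) (Fin d) ℝ)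
    (i : Fin t → Fin n) : Matrix (Fin d) (Fin d) ℝ :=
  (List.ofFn fun j => U j (i j)).prod

/-- The spectral (operator) norm of a real `d × d` matrix. -/
noncomputable def specNorm {d : ℕ} (A : Matrix (Fin d) (Fin d) ℝ) : ℝ :=
  ‖(Matrix.toEuclideanCLM (𝕜 := ℝ) A)‖

/-- The completely bounded norm of a `t`-tensor `T` acting on `ℝ^n`:
`sup ‖∑_{i ∈ [n]^t} T_i U_1(i_1)⋯U_t(i_t)‖` over all `d ∈ ℕ` and orthogonal matrices
`U_j(i) ∈ O(d)`. -/
noncomputable def cbNorm (n t : ℕ) (T : (Fin t → Fin n) → ℝ) : ℝ :=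
  sSup { r | ∃ d : ℕ, ∃ U : Fin t → Fin n → Matrix (Fin d) (Fin d) ℝ,
    (∀ j i, (U j i)ᵀ * U j i = 1) ∧
    r = specNorm (∑ i : Fin t → Fin n, T i • prodU U i) }

/-- Two families with the same Gram matrix differ by an isometry of the ambient space: sending
`∑ c_j x_j` to `∑ c_j y_j` is well defined and norm-preserving on the span of the `x_j`, and an
isometry on a subspace extends to the whole finite-dimensional space. -/
theorem exists_linearIsometry_of_inner_eq {ι E : Type*} [NormedAddCommGroup E]
    [InnerProductSpace ℝ E] [FiniteDimensional ℝ E] (x y : ι → E)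
    (h : ∀ j k, inner ℝ (x j) (x k) = inner ℝ (y j) (y k)) :
    ∃ f : E →ₗᵢ[ℝ] E, ∀ j, f (x j) = y j := by
  have hin (c c' : ι →₀ ℝ) :
      inner ℝ (Finsupp.linearCombination ℝ x c) (Finsupp.linearCombination ℝ x c') =
        inner ℝ (Finsupp.linearCombination ℝ y c) (Finsupp.linearCombination ℝ y c') := by
    simp only [Finsupp.linearCombination_apply, Finsupp.sum, sum_inner, inner_sum,
      inner_smul_left, inner_smul_right, h]
  have hn (c : ι →₀ ℝ) :
      ‖Finsupp.linearCombination ℝ x c‖ = ‖Finsupp.linearCombination ℝ y c‖ := by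
    rw [@norm_eq_sqrt_real_inner E, @norm_eq_sqrt_real_inner E, hin]
  have hker : LinearMap.ker (Finsupp.linearCombination ℝ x) ≤
      LinearMap.ker (Finsupp.linearCombination ℝ y) := fun c hc => by
    rw [LinearMap.mem_ker] at hc ⊢
    rw [← norm_eq_zero, ← hn, hc, norm_zero]
  let g : LinearMap.range (Finsupp.linearCombination ℝ x) →ₗ[ℝ] E :=
    (Submodule.liftQ _ (Finsupp.linearCombination ℝ y) hker) ∘ₗ
      (Finsupp.linearCombination ℝ x).quotKerEquivRange.symm.toLinearMap
  have hg (c : ι →₀ ℝ) :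
      g ⟨Finsupp.linearCombination ℝ x c, LinearMap.mem_range_self _ c⟩ =
        Finsupp.linearCombination ℝ y c := by
    simp only [g, LinearMap.comp_apply, LinearEquiv.coe_coe]
    have := LinearMap.quotKerEquivRange_symm_apply_image (Finsupp.linearCombination ℝ x) c
      (LinearMap.mem_range_self _ c)
    rw [this]
    simp
  let G : LinearMap.range (Finsupp.linearCombination ℝ x) →ₗᵢ[ℝ] E :=
    ⟨g, by
      rintro ⟨_, c, rfl⟩
      rw [hg, ← hn]
      rfl⟩
  refine ⟨G.extend, fun j => ?_⟩
  have h1 := G.extend_apply ⟨_, LinearMap.mem_range_self _ (Finsupp.single j 1)⟩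
  have h2 := hg (Finsupp.single j 1)
  simp only [Finsupp.linearCombination_single, one_smul] at h1 h2
  exact h1.trans h2

/-- The action of a `d × d` matrix on Euclidean `ℝ^d`. -/
noncomputable abbrev act {d : ℕ} (A : Matrix (Fin d) (Fin d) ℝ) (x : EuclideanSpace ℝ (Fin d)) :
    EuclideanSpace ℝ (Fin d) :=
  Matrix.toEuclideanCLM (𝕜 := ℝ) A x

theorem inner_act {d : ℕ} {A : Matrix (Fin d) (Fin d) ℝ} (hA : Aᵀ * A = 1)
    (x y : EuclideanSpace ℝ (Fin d)) : inner ℝ (act A x) (act A y) = inner ℝ x y := by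
  have h : star (Matrix.toEuclideanCLM (𝕜 := ℝ) A) * Matrix.toEuclideanCLM (𝕜 := ℝ) A = 1 := by
    rw [← map_star, ← map_mul, star_eq_conjTranspose, conjTranspose_eq_transpose_of_trivial, hA,
      map_one]
  rw [ContinuousLinearMap.star_eq_adjoint] at h
  have h' := congrArg (fun F => inner ℝ (F x) y) h
  simp only [mul_apply_eq_comp] at h'
  rw [ContinuousLinearMap.adjoint_inner_left] at h'
  exact h'

theorem exists_matrix_of_linearIsometry {d : ℕ}
    (f : EuclideanSpace ℝ (Fin d) →ₗᵢ[ℝ] EuclideanSpace ℝ (Fin d)) :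
    ∃ A : Matrix (Fin d) (Fin d) ℝ, Aᵀ * A = 1 ∧ ∀ x, act A x = f x := by
  obtain ⟨A, hA⟩ := EquivLike.surjective (Matrix.toEuclideanCLM (𝕜 := ℝ) (n := Fin d))
    f.toContinuousLinearMap
  refine ⟨A, ?_, fun x => by rw [act, hA]; rfl⟩
  apply EquivLike.injective (Matrix.toEuclideanCLM (𝕜 := ℝ) (n := Fin d))
  rw [← conjTranspose_eq_transpose_of_trivial, ← star_eq_conjTranspose, map_mul, map_star, map_one,
    hA, ContinuousLinearMap.star_eq_adjoint]
  ext1 x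
  refine ext_inner_right ℝ fun y => ?_
  rw [mul_apply_eq_comp, ContinuousLinearMap.adjoint_inner_left]
  exact f.inner_map_map x y

theorem prodU_succ {n t d : ℕ} (U : Fin (t + 1) → Fin n → Matrix (Fin d) (Fin d) ℝ)
    (i : Fin (t + 1) → Fin n) :
    prodU U i = U 0 (i 0) * prodU (fun j => U j.succ) (Fin.tail i) := by
  simp [prodU, List.ofFn_succ, Fin.tail]

/-- The Gram condition without concatenations: if `a, b` share their first `ℓ` entries, `c, e`
share theirs, and `a, c` and `b, e` agree from position `ℓ` on, then
`⟨v_a, v_b⟩ = ⟨v_c, v_e⟩`. All `ℓ` are allowed; `ℓ = 0` is trivial, and `ℓ ≥ t` says that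
all `v_a` have the same norm. -/
def GramInvariant {n t d : ℕ} (v : (Fin t → Fin n) → EuclideanSpace ℝ (Fin d)) : Prop :=
  ∀ (ℓ : ℕ) (a b c e : Fin t → Fin n),
    (∀ q : Fin t, (q : ℕ) < ℓ → a q = b q ∧ c q = e q) →
    (∀ q : Fin t, ℓ ≤ (q : ℕ) → a q = c q ∧ b q = e q) →
    inner ℝ (v a) (v b) = inner ℝ (v c) (v e)

/-- The common orthogonal prefix of two products can be cancelled from their inner product. -/
theorem gramInvariant_prodU {n t d : ℕ} (U : Fin t → Fin n → Matrix (Fin d) (Fin d) ℝ)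
    (hU : ∀ j i, (U j i)ᵀ * U j i = 1) (w : EuclideanSpace ℝ (Fin d)) :
    GramInvariant fun i => act (prodU U i) w := by
  induction t with
  | zero =>
    intro ℓ a b a' b' _ _
    rw [Subsingleton.elim a a', Subsingleton.elim b b']
  | succ t ih =>
    intro ℓ a b a' b' h1 h2
    cases ℓ with
    | zero =>
      rw [show a = a' from funext fun q => (h2 q (Nat.zero_le _)).1,
        show b = b' from funext fun q => (h2 q (Nat.zero_le _)).2]
    | succ ℓ =>
      have h0 := h1 0 (Nat.succ_pos _)
      simp only [prodU_succ, act, map_mul, mul_apply_eq_comp, ← h0.1, ← h0.2]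
      rw [inner_act (hU _ _), inner_act (hU _ _)]
      exact ih (fun j => U j.succ) (fun j i => hU _ _) ℓ _ _ _ _
        (fun q hq => h1 q.succ (by simpa using hq)) (fun q hq => h2 q.succ (by simpa using hq))

theorem norm_act_prodU {n t d : ℕ} (U : Fin t → Fin n → Matrix (Fin d) (Fin d) ℝ)
    (hU : ∀ j i, (U j i)ᵀ * U j i = 1) (i : Fin t → Fin n) (w : EuclideanSpace ℝ (Fin d)) :
    ‖act (prodU U i) w‖ = ‖w‖ := by
  induction t with
  | zero => simp [prodU, act]
  | succ t ih =>
    rw [← ih (fun j => U j.succ) (fun j i => hU _ _) (Fin.tail i)]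
    simp only [prodU_succ, act, map_mul, mul_apply_eq_comp]
    rw [@norm_eq_sqrt_real_inner (EuclideanSpace ℝ (Fin d)), inner_act (hU _ _),
      ← @norm_eq_sqrt_real_inner (EuclideanSpace ℝ (Fin d))]

/-- Every Gram-invariant family of unit vectors has the form `U_1(i_1) ⋯ U_t(i_t) w`. By induction
on `t`: the families `v_{i·j}`, for different first entries `i`, have the same Gram matrix, so
orthogonal matrices `U_1(i)` carry one of them, `v_{i₀·j}`, to all the others, and the induction
hypothesis applies to `v_{i₀·j}`. The unit vector in `hd` matters only for `n = 0`, where the family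
may be empty. -/
theorem exists_prodU_of_gramInvariant {n t d : ℕ}
    (hd : ∃ w : EuclideanSpace ℝ (Fin d), ‖w‖ = 1)
    (v : (Fin t → Fin n) → EuclideanSpace ℝ (Fin d)) (hv : ∀ i, ‖v i‖ = 1)
    (hG : GramInvariant v) :
    ∃ U : Fin t → Fin n → Matrix (Fin d) (Fin d) ℝ, (∀ j i, (U j i)ᵀ * U j i = 1) ∧
      ∃ w : EuclideanSpace ℝ (Fin d), ‖w‖ = 1 ∧ ∀ i, v i = act (prodU U i) w := by
  induction t with
  | zero =>
    refine ⟨fun j => j.elim0, fun j => j.elim0, v Fin.elim0, hv _, fun i => ?_⟩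
    rw [Subsingleton.elim i Fin.elim0]
    simp [prodU, act]
  | succ t ih =>
    rcases Nat.eq_zero_or_pos n with rfl | hn
    · obtain ⟨w, hw⟩ := hd
      exact ⟨fun _ i => i.elim0, fun _ i => i.elim0, w, hw, fun i => (i 0).elim0⟩
    let i₀ : Fin n := ⟨0, hn⟩
    obtain ⟨U, hU, w, hw, h⟩ := ih (fun j => v (Fin.cons i₀ j)) (fun j => hv _) (by
      intro ℓ a b a' b' h1 h2
      refine hG (ℓ + 1) _ _ _ _ (fun q => ?_) (fun q => ?_)
      · refine Fin.cases (by simp) (fun q hq => ?_) q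
        simpa using h1 q (by simpa using hq)
      · refine Fin.cases (by simp) (fun q hq => ?_) q
        simpa using h2 q (by simpa using hq))
    have hex (i : Fin n) : ∃ A : Matrix (Fin d) (Fin d) ℝ, Aᵀ * A = 1 ∧
        ∀ j : Fin t → Fin n, act A (v (Fin.cons i₀ j)) = v (Fin.cons i j) := by
      obtain ⟨f, hf⟩ := exists_linearIsometry_of_inner_eq
        (fun j : Fin t → Fin n => v (Fin.cons i₀ j)) (fun j => v (Fin.cons i j)) (by
          intro j k
          refine hG 1 _ _ _ _ (fun q => ?_) (fun q => ?_)
          · refine Fin.cases (by simp) (fun q hq => ?_) q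
            simp at hq
          · refine Fin.cases (by simp) (fun q hq => ?_) q
            simp)
      obtain ⟨A, hA, hAf⟩ := exists_matrix_of_linearIsometry f
      exact ⟨A, hA, fun j => (hAf _).trans (hf j)⟩
    choose A hA hAv using hex
    refine ⟨Fin.cons A U, fun j => Fin.cases (by simpa using hA) (by simpa using hU) j, w, hw,
      fun i => ?_⟩
    rw [prodU_succ, act, map_mul, mul_apply_eq_comp]
    simp only [Fin.cons_zero, Fin.cons_succ]
    have := h (Fin.tail i)
    rw [act] at this
    rw [← this]
    change v i = act _ _
    rw [hAv, Fin.cons_self_tail]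

/-- For unit vectors, `GramInvariant` is the Gram condition over nonempty prefixes and suffixes:
the extra splittings with an empty prefix or suffix hold automatically. -/
theorem gramInvariant_iff {n t d : ℕ} (v : (Fin t → Fin n) → EuclideanSpace ℝ (Fin d))
    (hv : ∀ i, ‖v i‖ = 1) :
    GramInvariant v ↔ ∀ ℓ m : ℕ, ∀ h : ℓ + m = t, 0 < ℓ → 0 < m →
      ∀ (i i' : Fin ℓ → Fin n) (j k : Fin m → Fin n),
        inner ℝ (v (tapp h i j)) (v (tapp h i k)) =
          inner ℝ (v (tapp h i' j)) (v (tapp h i' k)) := by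
  constructor
  · rintro hG ℓ m rfl _ _ i i' j k
    refine hG ℓ _ _ _ _ (fun q => ?_) (fun q => ?_)
    · refine Fin.addCases (fun q _ => ?_) (fun q hq => ?_) q
      · simp [tapp]
      · simp at hq
    · refine Fin.addCases (fun q hq => ?_) (fun q hq => ?_) q
      · simp at hq; omega
      · simp [tapp]
  · intro H ℓ a b a' b' h1 h2
    rcases Nat.eq_zero_or_pos ℓ with rfl | hℓ
    · rw [show a = a' from funext fun q => (h2 q (Nat.zero_le _)).1,
        show b = b' from funext fun q => (h2 q (Nat.zero_le _)).2]
    rcases le_or_gt t ℓ with htl | htl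
    · rw [show a = b from funext fun q => (h1 q (by omega)).1,
        show a' = b' from funext fun q => (h1 q (by omega)).2]
      simp [hv]
    obtain ⟨m, rfl⟩ := Nat.exists_eq_add_of_lt htl
    have hsplit (c e : Fin (ℓ + m + 1) → Fin n) (c' : Fin (ℓ + m + 1) → Fin n)
        (hc : ∀ q : Fin (ℓ + m + 1), (q : ℕ) < ℓ → c q = e q)
        (hc' : ∀ q : Fin (ℓ + m + 1), ℓ ≤ (q : ℕ) → c q = c' q) :
        c = tapp (ℓ := ℓ) (m := m + 1) rfl (fun q => e (Fin.castAdd (m + 1) q))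
          (fun q => c' (Fin.natAdd ℓ q)) := by
      funext q
      refine Fin.addCases (m := ℓ) (n := m + 1) (fun q => ?_) (fun q => ?_) q
      · simpa [tapp] using hc (Fin.castAdd (m + 1) q) (by simp)
      · simpa [tapp] using hc' (Fin.natAdd ℓ q) (by simp)
    rw [hsplit a a a (fun _ _ => rfl) (fun _ _ => rfl),
      hsplit b a b (fun q hq => (h1 q hq).1.symm) (fun _ _ => rfl),
      hsplit a' a' a (fun _ _ => rfl) (fun q hq => (h2 q hq).1.symm),
      hsplit b' a' b (fun q hq => (h1 q hq).2.symm) (fun q hq => (h2 q hq).2.symm)]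
    exact H ℓ (m + 1) rfl hℓ (Nat.succ_pos _) _ _ _ _

theorem inner_toLp {d : ℕ} (x y : Fin d → ℝ) :
    inner ℝ (WithLp.toLp 2 x) (WithLp.toLp 2 y) = ∑ a, x a * y a := by
  simp [PiLp.inner_apply, mul_comm]

theorem norm_eq_one_iff_sum {d : ℕ} (x : Fin d → ℝ) :
    ‖WithLp.toLp 2 x‖ = 1 ↔ ∑ a, x a * x a = 1 := by
  rw [← inner_toLp, real_inner_self_eq_norm_sq]
  exact (pow_eq_one_iff_of_nonneg (norm_nonneg _) two_ne_zero).symm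

/-- The values `∑ T_i ⟨u, v_i⟩` over unit vectors `u` and Gram-invariant families of unit vectors
`v_i`, with all vectors taken in a Euclidean space. -/
def vectorValues (n t : ℕ) (T : (Fin t → Fin n) → ℝ) : Set ℝ :=
  { r | ∃ d : ℕ, ∃ u : EuclideanSpace ℝ (Fin d),
    ∃ v : (Fin t → Fin n) → EuclideanSpace ℝ (Fin d),
      ‖u‖ = 1 ∧ (∀ i, ‖v i‖ = 1) ∧ GramInvariant v ∧ r = ∑ i, T i * inner ℝ u (v i) }

theorem act_sum_smul_prodU {n t d : ℕ} (T : (Fin t → Fin n) → ℝ)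
    (U : Fin t → Fin n → Matrix (Fin d) (Fin d) ℝ) (u w : EuclideanSpace ℝ (Fin d)) :
    inner ℝ u (act (∑ i, T i • prodU U i) w) = ∑ i, T i * inner ℝ u (act (prodU U i) w) := by
  simp [act, map_sum, map_smul, inner_sum, inner_smul_right]

theorem cbNorm_eq_sSup_vectorValues (n t : ℕ) (T : (Fin t → Fin n) → ℝ) :
    cbNorm n t T = sSup (vectorValues n t T) := by
  have hbdd : BddAbove (vectorValues n t T) := by
    refine ⟨∑ i, |T i|, ?_⟩
    rintro _ ⟨d, u, v, hu, hv, -, rfl⟩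
    refine Finset.sum_le_sum fun i _ => (le_abs_self _).trans ?_
    rw [abs_mul]
    have := abs_real_inner_le_norm u (v i)
    rw [hu, hv, one_mul] at this
    exact mul_le_of_le_one_right (abs_nonneg _) this
  -- Orthogonal `u` and constant `v` give the value `0`, needed when `A w = 0` and when `d = 0`.
  have hzero : (0 : ℝ) ∈ vectorValues n t T := by
    refine ⟨2, EuclideanSpace.single 0 1, fun _ => EuclideanSpace.single 1 1, by simp, by simp,
      fun _ _ _ _ _ _ _ => rfl, by simp [EuclideanSpace.inner_single_left]⟩
  have hle : ∀ r ∈ { r | ∃ d : ℕ, ∃ U : Fin t → Fin n → Matrix (Fin d) (Fin d) ℝ,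
      (∀ j i, (U j i)ᵀ * U j i = 1) ∧ r = specNorm (∑ i : Fin t → Fin n, T i • prodU U i) },
      r ≤ sSup (vectorValues n t T) := by
    rintro _ ⟨d, U, hU, rfl⟩
    refine ContinuousLinearMap.opNorm_le_of_unit_norm (le_csSup hbdd hzero) fun w hw => ?_
    -- Pairing `y = A w` with its own direction realises `‖A w‖` as a value of the vector problem.
    set y := act (∑ i, T i • prodU U i) w with hy
    change ‖y‖ ≤ _
    by_cases hy0 : y = 0
    · rw [hy0, norm_zero]
      exact le_csSup hbdd hzero
    refine le_csSup hbdd ⟨d, ‖y‖⁻¹ • y, fun i => act (prodU U i) w, ?_, ?_,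
      gramInvariant_prodU U hU w, ?_⟩
    · exact norm_smul_inv_norm (𝕜 := ℝ) hy0
    · exact fun i => (norm_act_prodU U hU i w).trans hw
    · rw [← act_sum_smul_prodU, ← hy, real_inner_smul_left, real_inner_self_eq_norm_sq]
      have := norm_ne_zero_iff.2 hy0
      field_simp
  refine le_antisymm (csSup_le ⟨_, 0, fun _ _ => 1, by simp, rfl⟩ hle) ?_
  refine csSup_le ⟨0, hzero⟩ ?_
  rintro _ ⟨d, u, v, hu, hv, hG, rfl⟩
  obtain ⟨U, hU, w, hw, h⟩ := exists_prodU_of_gramInvariant ⟨u, hu⟩ v hv hG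
  refine le_trans ?_ (le_csSup ⟨_, hle⟩ ⟨d, U, hU, rfl⟩)
  simp only [h]
  rw [← act_sum_smul_prodU]
  refine (real_inner_le_norm _ _).trans ?_
  rw [hu, one_mul]
  exact ContinuousLinearMap.unit_le_opNorm _ _ hw.le

/-- `‖T‖_cb` equals the supremum, over dimensions `d`, unit vectors `u ∈ ℝ^d`
and families of unit vectors `{v_i}_{i ∈ [n]^t}` satisfying the Gram condition, of
`∑_{i ∈ [n]^t} T_i ⟨u, v_i⟩`. -/
theorem stmt_4 (n t : ℕ) (T : (Fin t → Fin n) → ℝ) :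
    cbNorm n t T =
      sSup { r | ∃ d : ℕ, ∃ u : Fin d → ℝ, ∃ v : (Fin t → Fin n) → (Fin d → ℝ),
        (∑ a, u a * u a = 1) ∧ (∀ i, ∑ a, v i a * v i a = 1) ∧
        (∀ ℓ m : ℕ, ∀ h : ℓ + m = t, 0 < ℓ → 0 < m →
          ∀ (i i' : Fin ℓ → Fin n) (j k : Fin m → Fin n),
            ∑ a, v (tapp h i j) a * v (tapp h i k) a =
              ∑ a, v (tapp h i' j) a * v (tapp h i' k) a) ∧
        r = ∑ i : Fin t → Fin n, T i * ∑ a, u a * v i a } := by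
  rw [cbNorm_eq_sSup_vectorValues]
  congr 1
  ext r
  simp only [← norm_eq_one_iff_sum]
  simp only [← inner_toLp]
  constructor
  · rintro ⟨d, u, v, hu, hv, hG, rfl⟩
    exact ⟨d, u.ofLp, fun i => (v i).ofLp, hu, hv, (gramInvariant_iff v hv).1 hG, rfl⟩
  · rintro ⟨d, u, v, hu, hv, hG, rfl⟩
    exact ⟨d, WithLp.toLp 2 u, fun i => WithLp.toLp 2 (v i), hu, hv,
      (gramInvariant_iff _ hv).2 hG, rfl⟩
end

section
/- Let T ∈ ℝ^{n×⋯×n} be a t-tensor. Then ‖T‖_cb equals the maximum, over all positive semidefinite matrices X of size (1 + n^t) × (1 + n^t), with rows/columns indexed by {0} ∪ [n]^t, satisfying (i) all diagonal entries of X equal 1 and (ii) for every ℓ ∈ [t−1], all prefixes i, i' ∈ [n]^ℓ and all suffixes j, k ∈ [n]^{t−ℓ}: X_{i·j, i·k} = X_{i'·j, i'·k}, of the quantity Σ_{i ∈ [n]^t} T_i · X_{0, i}. Moreover this maximum is attained. -/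
/-!
Both sides describe inner products of the same families of unit vectors.  Given orthogonal
`U_j(i)` and unit vectors `u, v`, put `x_0 = u` and `x_i = U_1(i_1) ⋯ U_t(i_t) v`; the Gram matrix
of this family is feasible, because a common prefix acts by one orthogonal matrix, and its value
is `⟨u, (∑ T_i U_1(i_1) ⋯ U_t(i_t)) v⟩`.  Hence the operator norm is bounded by the SDP maximum.

Conversely, a feasible `X` is the Gram matrix of unit vectors `x_0, x_i`.  The constraint for
prefixes of length one says that the families `(x_{c·j})_j` have the same Gram matrix for every
letter `c`, so they are related by orthogonal maps (`exists_orthogonal_of_gram_eq`); peeling off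
one letter at a time (`exists_prodU_of_inv`) yields `x_i = U_1(i_1) ⋯ U_t(i_t) v`.  The last
letter uses that the diagonal of `X` is constant.

The maximum is attained because feasible Gram families in a space of fixed dimension form a
compact set.
-/

open Matrix

open scoped InnerProductSpace MatrixOrder Matrix.Norms.L2Operator

local notation "Eu" d => EuclideanSpace ℝ (Fin d)

/-! ### Orthogonal matrices and Gram matrices -/

/-- The operator on `ℝ^d` given by a matrix. -/
noncomputable abbrev opOf {d : ℕ} (A : Matrix (Fin d) (Fin d) ℝ) :
    EuclideanSpace ℝ (Fin d) →L[ℝ] EuclideanSpace ℝ (Fin d) :=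
  Matrix.toEuclideanCLM (𝕜 := ℝ) A

lemma opOf_mul {d : ℕ} (A B : Matrix (Fin d) (Fin d) ℝ) (v : Eu d) :
    opOf (A * B) v = opOf A (opOf B v) := by
  simp [opOf, map_mul]

lemma inner_opOf {d : ℕ} {A : Matrix (Fin d) (Fin d) ℝ} (hA : Aᵀ * A = 1) (v w : Eu d) :
    ⟪opOf A v, opOf A w⟫_ℝ = ⟪v, w⟫_ℝ := by
  have h : star (opOf A) * opOf A = 1 := by
    have h1 : star A * A = 1 := by
      rw [Matrix.star_eq_conjTranspose, Matrix.conjTranspose_eq_transpose_of_trivial]; exact hA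
    simp only [opOf]
    rw [← map_star, ← map_mul, h1, map_one]
  rw [← ContinuousLinearMap.adjoint_inner_right, ← ContinuousLinearMap.star_eq_adjoint,
    ← mul_apply_eq_comp, h, one_apply_eq_self]

/-- Two finite families of vectors with the same Gram matrix differ by an orthogonal matrix. -/
lemma exists_orthogonal_of_gram_eq {d : ℕ} {ι : Type*} [Fintype ι] (f g : ι → Eu d)
    (h : ∀ a b, ⟪f a, f b⟫_ℝ = ⟪g a, g b⟫_ℝ) :
    ∃ U : Matrix (Fin d) (Fin d) ℝ, Uᵀ * U = 1 ∧ ∀ a, opOf U (f a) = g a := by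
  classical
  let F : (ι → ℝ) →ₗ[ℝ] Eu d := Fintype.linearCombination ℝ f
  let G : (ι → ℝ) →ₗ[ℝ] Eu d := Fintype.linearCombination ℝ g
  have hn : ∀ c, ‖F c‖ = ‖G c‖ := by
    intro c
    rw [← sq_eq_sq₀ (norm_nonneg _) (norm_nonneg _), ← real_inner_self_eq_norm_sq,
      ← real_inner_self_eq_norm_sq]
    simp only [F, G, Fintype.linearCombination_apply, sum_inner, inner_sum, inner_smul_left,
      inner_smul_right, h]
  obtain ⟨s, hs⟩ := LinearMap.exists_rightInverse_of_surjective F.rangeRestrict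
    F.range_rangeRestrict
  have hs' : ∀ y, F (s y) = y := fun y => by
    have := congrArg Subtype.val (LinearMap.congr_fun hs y)
    simpa using this
  -- `G ∘ s` does not depend on the section `s`, since `F` and `G` have the same kernel.
  let L : LinearMap.range F →ₗᵢ[ℝ] Eu d :=
    { toLinearMap := G ∘ₗ s
      norm_map' := fun y => by
        rw [LinearMap.comp_apply, ← hn, hs']; rfl }
  have hL : ∀ c, L ⟨F c, LinearMap.mem_range_self F c⟩ = G c := by
    intro c
    change G (s _) = G c
    rw [← sub_eq_zero, ← map_sub, ← norm_eq_zero, ← hn, map_sub, hs']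
    simp
  let V := L.extend
  have hV : ∀ a, V (f a) = g a := by
    intro a
    have h1 := hL (Pi.single a 1)
    have h2 := L.extend_apply ⟨F (Pi.single a 1), LinearMap.mem_range_self F _⟩
    rw [h1] at h2
    simpa [F, G, Fintype.linearCombination_apply_single] using h2
  let U : Matrix (Fin d) (Fin d) ℝ :=
    (Matrix.toEuclideanCLM (𝕜 := ℝ) (n := Fin d)).symm V.toContinuousLinearMap
  have hU : opOf U = V.toContinuousLinearMap := by simp [opOf, U]
  refine ⟨U, ?_, fun a => ?_⟩
  · have h2 : star (opOf U) * opOf U = 1 := by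
      ext1 v
      refine ext_inner_left ℝ fun w => ?_
      rw [mul_apply_eq_comp, ContinuousLinearMap.star_eq_adjoint,
        ContinuousLinearMap.adjoint_inner_right, hU]
      simp
    have h1 : star U * U = 1 := by
      apply (Matrix.toEuclideanCLM (𝕜 := ℝ) (n := Fin d)).injective
      change opOf (star U * U) = opOf 1
      simp only [opOf]
      rw [map_mul, map_star, map_one]
      exact h2
    rwa [Matrix.star_eq_conjTranspose, Matrix.conjTranspose_eq_transpose_of_trivial] at h1
  · rw [hU]; exact hV a

/-! ### Factoring prefix-invariant families -/

lemma tapp_cons {n ℓ m t : ℕ} (h : ℓ + m = t) (h' : ℓ + 1 + m = t + 1) (c : Fin n)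
    (i : Fin ℓ → Fin n) (j : Fin m → Fin n) :
    tapp h' (Fin.cons c i : Fin (ℓ + 1) → Fin n) j = Fin.cons c (tapp h i j) := by
  subst h
  funext q
  simp only [tapp, Fin.append_cons]
  simp only [Function.comp_apply, Fin.cast_cast, Fin.cast_eq_self]
  rfl

lemma tapp_one {n t : ℕ} (h : 1 + t = t + 1) (c : Fin n) (j : Fin t → Fin n) :
    tapp h (fun _ : Fin 1 => c) j = Fin.cons c j := by
  have := tapp_cons (Nat.zero_add t) (by omega) c Fin.elim0 j
  have e : (Fin.cons c Fin.elim0 : Fin (0 + 1) → Fin n) = fun _ => c := by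
    funext q; rw [Subsingleton.elim (α := Fin 1) q 0]; rfl
  rw [e] at this
  refine this.trans ?_
  congr 1
  funext q
  simp [tapp]

/-- The inner products of a family indexed by `[n]^t` do not depend on a common prefix.  Unlike
in the SDP constraints, the prefix may have any length `0 ≤ ℓ ≤ t`. -/
def PrefixInv {n t d : ℕ} (x : (Fin t → Fin n) → EuclideanSpace ℝ (Fin d)) : Prop :=
  ∀ ℓ m : ℕ, ∀ h : ℓ + m = t, ∀ (i i' : Fin ℓ → Fin n) (j k : Fin m → Fin n),
    ⟪x (tapp h i j), x (tapp h i k)⟫_ℝ = ⟪x (tapp h i' j), x (tapp h i' k)⟫_ℝ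

/-- A prefix-invariant family has the form `U_1(i_1) ⋯ U_t(i_t) v`, by induction on `t`: the
orthogonal matrix for the first letter `c` carries the family `x_{i₀·j}` to `x_{c·j}`. -/
lemma exists_prodU_of_inv {n d : ℕ} (i₀ : Fin n) : ∀ (t : ℕ) (x : (Fin t → Fin n) → Eu d),
    PrefixInv x → ∃ U : Fin t → Fin n → Matrix (Fin d) (Fin d) ℝ,
      (∀ j i, (U j i)ᵀ * U j i = 1) ∧
      ∀ i, x i = opOf (prodU U i) (x fun _ => i₀) := by
  intro t
  induction t with
  | zero =>
    intro x _
    refine ⟨fun j => j.elim0, fun j => j.elim0, fun i => ?_⟩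
    rw [Subsingleton.elim i fun _ => i₀]
    simp [prodU, opOf]
  | succ t ih =>
    intro x hx
    have h1 : ∀ c : Fin n, ∃ U : Matrix (Fin d) (Fin d) ℝ, Uᵀ * U = 1 ∧
        ∀ j : Fin t → Fin n, opOf U (x (Fin.cons i₀ j)) = x (Fin.cons c j) := by
      intro c
      refine exists_orthogonal_of_gram_eq _ _ fun a b => ?_
      have := hx 1 t (by omega) (fun _ => i₀) (fun _ => c) a b
      simpa only [tapp_one] using this
    choose U₀ hU₀ hU₀' using h1
    obtain ⟨U', hU', hx'⟩ := ih (fun j => x (Fin.cons i₀ j)) (by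
      intro ℓ m h i i' j k
      have := hx (ℓ + 1) m (by omega) (Fin.cons i₀ i) (Fin.cons i₀ i') j k
      simpa only [tapp_cons h] using this)
    refine ⟨Fin.cons U₀ U', ?_, fun i => ?_⟩
    · intro j
      refine Fin.cases ?_ (fun j => ?_) j
      · simpa using hU₀
      · simpa using hU' j
    · have e : (Fin.cons i₀ fun _ => i₀ : Fin (t + 1) → Fin n) = fun _ => i₀ := by
        funext q; refine Fin.cases ?_ (fun q => ?_) q <;> simp
      have hp : prodU (Fin.cons U₀ U' : Fin (t + 1) → _) i
          = U₀ (i 0) * prodU U' (Fin.tail i) := by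
        simp [prodU, List.ofFn_succ, Fin.tail]
      have h3 := hx' (Fin.tail i)
      simp only [e] at h3
      rw [hp, opOf_mul, ← h3, hU₀', Fin.cons_self_tail]

lemma prodU_orthogonal {n t d : ℕ} {U : Fin t → Fin n → Matrix (Fin d) (Fin d) ℝ}
    (hU : ∀ j i, (U j i)ᵀ * U j i = 1) (i : Fin t → Fin n) :
    (prodU U i)ᵀ * prodU U i = 1 := by
  have : prodU U i ∈ Matrix.orthogonalGroup (Fin d) ℝ := by
    refine Submonoid.list_prod_mem _ fun A hA => ?_
    obtain ⟨j, rfl⟩ := (List.mem_ofFn' _ _).1 hA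
    exact (Matrix.mem_orthogonalGroup_iff' (Fin d) ℝ).2 (hU _ _)
  exact (Matrix.mem_orthogonalGroup_iff' (Fin d) ℝ).1 this

lemma prodU_tapp {n ℓ m t d : ℕ} (h : ℓ + m = t)
    (U : Fin t → Fin n → Matrix (Fin d) (Fin d) ℝ) (i : Fin ℓ → Fin n) (j : Fin m → Fin n) :
    prodU U (tapp h i j) = prodU (fun q => U (Fin.cast h (Fin.castAdd m q))) i *
      prodU (fun q => U (Fin.cast h (Fin.natAdd ℓ q))) j := by
  subst h
  simp [prodU, tapp, List.ofFn_add]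
  rfl

/-! ### Feasible families and the SDP -/

/-- A feasible family of vectors: unit vectors `x_0`, `x_i` for `i ∈ [n]^t`, whose Gram matrix
satisfies the prefix constraints of the SDP. -/
def Feasible {n t d : ℕ} (x : Option (Fin t → Fin n) → EuclideanSpace ℝ (Fin d)) : Prop :=
  (∀ a, ‖x a‖ = 1) ∧
    ∀ ℓ m : ℕ, ∀ h : ℓ + m = t, 0 < ℓ → 0 < m →
      ∀ (i i' : Fin ℓ → Fin n) (j k : Fin m → Fin n),
        ⟪x (some (tapp h i j)), x (some (tapp h i k))⟫_ℝ =
          ⟪x (some (tapp h i' j)), x (some (tapp h i' k))⟫_ℝ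

lemma Feasible.prefixInv {n t d : ℕ} {x : Option (Fin t → Fin n) → Eu d} (hx : Feasible x) :
    PrefixInv fun i => x (some i) := by
  intro ℓ m h i i' j k
  rcases Nat.eq_zero_or_pos ℓ with rfl | hℓ
  · rw [Subsingleton.elim i i']
  rcases Nat.eq_zero_or_pos m with rfl | hm
  · rw [Subsingleton.elim j k, real_inner_self_eq_norm_sq, real_inner_self_eq_norm_sq, hx.1, hx.1]
  exact hx.2 ℓ m h hℓ hm i i' j k

/-- The set of objective values `∑ T_i X_{0,i}` of the SDP over all feasible matrices `X`. -/
def sdpValues (n t : ℕ) (T : (Fin t → Fin n) → ℝ) : Set ℝ :=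
  { r | ∃ X : Matrix (Option (Fin t → Fin n)) (Option (Fin t → Fin n)) ℝ,
        X.PosSemidef ∧ (∀ a, X a a = 1) ∧
        (∀ ℓ m : ℕ, ∀ h : ℓ + m = t, 0 < ℓ → 0 < m →
          ∀ (i i' : Fin ℓ → Fin n) (j k : Fin m → Fin n),
            X (some (tapp h i j)) (some (tapp h i k)) =
              X (some (tapp h i' j)) (some (tapp h i' k))) ∧
        r = ∑ i : Fin t → Fin n, T i * X none (some i) }

lemma Feasible.mem_sdpValues {n t d : ℕ} (T : (Fin t → Fin n) → ℝ)
    {x : Option (Fin t → Fin n) → Eu d} (hx : Feasible x) :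
    ∑ i, T i * ⟪x none, x (some i)⟫_ℝ ∈ sdpValues n t T := by
  refine ⟨Matrix.gram ℝ x, Matrix.posSemidef_gram ℝ x, fun a => ?_, ?_, ?_⟩
  · rw [Matrix.gram_apply, real_inner_self_eq_norm_sq, hx.1, one_pow]
  · simpa only [Matrix.gram_apply] using hx.2
  · simp only [Matrix.gram_apply]

/-- Every feasible matrix is the Gram matrix of a feasible family in `ℝ^(1 + n^t)`. -/
lemma exists_feasible_of_mem {n t : ℕ} {T : (Fin t → Fin n) → ℝ} {r : ℝ}
    (hr : r ∈ sdpValues n t T) :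
    ∃ x : Option (Fin t → Fin n) → Eu (Fintype.card (Option (Fin t → Fin n))),
      Feasible x ∧ r = ∑ i, T i * ⟪x none, x (some i)⟫_ℝ := by
  obtain ⟨X, hX, hd, hp, rfl⟩ := hr
  classical
  obtain ⟨B, rfl⟩ := CStarAlgebra.nonneg_iff_eq_star_mul_self.mp hX.nonneg
  let e := Fintype.equivFin (Option (Fin t → Fin n))
  let x : Option (Fin t → Fin n) → Eu (Fintype.card (Option (Fin t → Fin n))) :=
    fun a => WithLp.toLp 2 fun q => B (e.symm q) a
  have hx : ∀ a b, ⟪x a, x b⟫_ℝ = (star B * B) a b := by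
    intro a b
    simp only [x, PiLp.inner_apply, Matrix.mul_apply, Matrix.star_apply]
    rw [← e.symm.sum_comp]
    simp [mul_comm]
  refine ⟨x, ⟨fun a => ?_, ?_⟩, ?_⟩
  · rw [← sq_eq_sq₀ (norm_nonneg _) zero_le_one, ← real_inner_self_eq_norm_sq, hx, hd, one_pow]
  · simpa only [hx] using hp
  · simp only [hx]

lemma isCompact_sdpValues (n t : ℕ) (T : (Fin t → Fin n) → ℝ) : IsCompact (sdpValues n t T) := by
  let E := Eu (Fintype.card (Option (Fin t → Fin n)))
  let K : Set (Option (Fin t → Fin n) → E) := {x | Feasible x}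
  have hK : IsCompact K := by
    refine (isCompact_univ_pi fun _ => isCompact_sphere (0 : E) 1).of_isClosed_subset ?_ ?_
    · simp only [K, Feasible, Set.ofPred_and, Set.ofPred_forall]
      refine IsClosed.inter (isClosed_iInter fun a => isClosed_eq (by fun_prop) (by fun_prop)) ?_
      repeat refine isClosed_iInter fun _ => ?_
      exact isClosed_eq (by fun_prop) (by fun_prop)
    · intro x hx a _
      simpa using hx.1 a
  have : sdpValues n t T = (fun x : Option (Fin t → Fin n) → E =>
      ∑ i, T i * ⟪x none, x (some i)⟫_ℝ) '' K := by
    ext r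
    constructor
    · intro hr
      obtain ⟨x, hx, rfl⟩ := exists_feasible_of_mem hr
      exact ⟨x, hx, rfl⟩
    · rintro ⟨x, hx, rfl⟩
      exact Feasible.mem_sdpValues T hx
  rw [this]
  exact hK.image (by fun_prop)

lemma zero_mem_sdpValues (n t : ℕ) (T : (Fin t → Fin n) → ℝ) : 0 ∈ sdpValues n t T := by
  classical
  refine ⟨1, Matrix.PosSemidef.one, fun a => by simp, ?_, by simp⟩
  intro ℓ m h _ _ i i' j k
  have : ∀ i : Fin ℓ → Fin n, tapp h i j = tapp h i k ↔ j = k := by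
    intro i
    constructor
    · intro H
      funext q
      have := congrFun H (Fin.cast h (Fin.natAdd ℓ q))
      simpa [tapp] using this
    · rintro rfl; rfl
  simp [Matrix.one_apply, this]

/-! ### Comparison with the operator norm -/

lemma inner_opOf_sum {n t d : ℕ} (T : (Fin t → Fin n) → ℝ)
    (A : (Fin t → Fin n) → Matrix (Fin d) (Fin d) ℝ) (u v : Eu d) :
    ⟪u, opOf (∑ i, T i • A i) v⟫_ℝ = ∑ i, T i * ⟪u, opOf (A i) v⟫_ℝ := by
  simp only [opOf, map_sum, map_smul, _root_.sum_apply,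
    _root_.smul_apply, inner_sum, inner_smul_right]

lemma inner_mem_sdpValues {n t d : ℕ} (T : (Fin t → Fin n) → ℝ)
    {U : Fin t → Fin n → Matrix (Fin d) (Fin d) ℝ} (hU : ∀ j i, (U j i)ᵀ * U j i = 1)
    {u v : Eu d} (hu : ‖u‖ = 1) (hv : ‖v‖ = 1) :
    ⟪u, opOf (∑ i, T i • prodU U i) v⟫_ℝ ∈ sdpValues n t T := by
  let x : Option (Fin t → Fin n) → Eu d := fun a => a.elim u fun i => opOf (prodU U i) v
  have hx : Feasible x := by
    refine ⟨fun a => ?_, ?_⟩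
    · cases a with
      | none => exact hu
      | some i =>
        rw [← sq_eq_sq₀ (norm_nonneg _) zero_le_one, ← real_inner_self_eq_norm_sq]
        simp only [x, Option.elim]
        rw [inner_opOf (prodU_orthogonal hU i), real_inner_self_eq_norm_sq, hv]
    · intro ℓ m h _ _ i i' j k
      simp only [x, Option.elim, prodU_tapp h, opOf_mul]
      rw [inner_opOf (prodU_orthogonal (fun _ _ => hU _ _) i),
        inner_opOf (prodU_orthogonal (fun _ _ => hU _ _) i')]
  rw [inner_opOf_sum]
  exact hx.mem_sdpValues T

/-- Every SDP value is at most the operator norm of some admissible sum. -/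
lemma exists_specNorm_ge {n t : ℕ} {T : (Fin t → Fin n) → ℝ} {r : ℝ}
    (hr : r ∈ sdpValues n t T) :
    ∃ d : ℕ, ∃ U : Fin t → Fin n → Matrix (Fin d) (Fin d) ℝ,
      (∀ j i, (U j i)ᵀ * U j i = 1) ∧ r ≤ specNorm (∑ i, T i • prodU U i) := by
  obtain ⟨x, hx, rfl⟩ := exists_feasible_of_mem hr
  have key : ∃ U : Fin t → Fin n → Matrix (Fin _) (Fin _) ℝ, (∀ j i, (U j i)ᵀ * U j i = 1) ∧
      ∃ v, ‖v‖ = 1 ∧ ∀ i, x (some i) = opOf (prodU U i) v := by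
    rcases Nat.eq_zero_or_pos n with rfl | hn
    · -- With an empty alphabet, at most the empty tuple exists, and `prodU` is then `1`.
      refine ⟨fun _ i => i.elim0, fun _ i => i.elim0, ?_⟩
      rcases isEmpty_or_nonempty (Fin t → Fin 0) with he | ⟨⟨i₁⟩⟩
      · exact ⟨x none, hx.1 _, fun i => he.elim i⟩
      · refine ⟨x (some i₁), hx.1 _, fun i => ?_⟩
        have ht : t = 0 := by
          rcases Nat.eq_zero_or_pos t with h | h
          · exact h
          · exact (i₁ ⟨0, h⟩).elim0
        subst ht
        rw [Subsingleton.elim i i₁]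
        simp [prodU, opOf]
    · obtain ⟨U, hU, h⟩ := exists_prodU_of_inv ⟨0, hn⟩ t _ hx.prefixInv
      exact ⟨U, hU, _, hx.1 _, h⟩
  obtain ⟨U, hU, v, hv, h⟩ := key
  refine ⟨_, U, hU, ?_⟩
  simp only [h]
  rw [← inner_opOf_sum]
  calc _ ≤ ‖x none‖ * ‖opOf (∑ i, T i • prodU U i) v‖ := real_inner_le_norm _ _
    _ ≤ 1 * (‖opOf (∑ i, T i • prodU U i)‖ * ‖v‖) := by
        rw [hx.1]; gcongr; exact ContinuousLinearMap.le_opNorm _ _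
    _ = specNorm (∑ i, T i • prodU U i) := by rw [hv, one_mul, mul_one]; rfl

lemma specNorm_le {n t d : ℕ} {T : (Fin t → Fin n) → ℝ} {M : ℝ}
    (hM : ∀ r ∈ sdpValues n t T, r ≤ M)
    {U : Fin t → Fin n → Matrix (Fin d) (Fin d) ℝ} (hU : ∀ j i, (U j i)ᵀ * U j i = 1) :
    specNorm (∑ i, T i • prodU U i) ≤ M := by
  have hM0 : 0 ≤ M := hM 0 (zero_mem_sdpValues n t T)
  refine ContinuousLinearMap.opNorm_le_of_unit_norm hM0 fun v hv => ?_
  set w := Matrix.toEuclideanCLM (𝕜 := ℝ) (∑ i, T i • prodU U i) v with hw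
  rcases eq_or_ne w 0 with h0 | h0
  · simpa [h0] using hM0
  have h0' : ‖w‖ ≠ 0 := norm_ne_zero_iff.2 h0
  have h1 := hM _ (inner_mem_sdpValues T hU (u := ‖w‖⁻¹ • w) (by simp [norm_smul, h0']) hv)
  simp only [opOf] at h1
  rw [← hw, inner_smul_left, real_inner_self_eq_norm_sq] at h1
  simpa [pow_two, h0'] using h1

/-- `‖T‖_cb` is the maximum (and this maximum is attained) over positive
semidefinite matrices `X` indexed by `{0} ∪ [n]^t` with unit diagonal satisfying the Gram
condition `X_{i·j, i·k} = X_{i'·j, i'·k}`, of `∑_{i ∈ [n]^t} T_i X_{0,i}`. -/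
theorem stmt_5 (n t : ℕ) (T : (Fin t → Fin n) → ℝ) :
    IsGreatest
      { r | ∃ X : Matrix (Option (Fin t → Fin n)) (Option (Fin t → Fin n)) ℝ,
        X.PosSemidef ∧ (∀ a, X a a = 1) ∧
        (∀ ℓ m : ℕ, ∀ h : ℓ + m = t, 0 < ℓ → 0 < m →
          ∀ (i i' : Fin ℓ → Fin n) (j k : Fin m → Fin n),
            X (some (tapp h i j)) (some (tapp h i k)) =
              X (some (tapp h i' j)) (some (tapp h i' k))) ∧
        r = ∑ i : Fin t → Fin n, T i * X none (some i) }
      (cbNorm n t T) := by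
  change IsGreatest (sdpValues n t T) (cbNorm n t T)
  obtain ⟨M, hMmem, hM⟩ := (isCompact_sdpValues n t T).exists_isGreatest
    ⟨0, zero_mem_sdpValues n t T⟩
  obtain ⟨d, U, hU, hle⟩ := exists_specNorm_ge hMmem
  have hlub : IsGreatest { r | ∃ d : ℕ, ∃ U : Fin t → Fin n → Matrix (Fin d) (Fin d) ℝ,
      (∀ j i, (U j i)ᵀ * U j i = 1) ∧
      r = specNorm (∑ i : Fin t → Fin n, T i • prodU U i) } M := by
    refine ⟨⟨d, U, hU, le_antisymm hle (specNorm_le (fun r hr => hM hr) hU)⟩, ?_⟩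
    rintro _ ⟨d', U', hU', rfl⟩
    exact specNorm_le (fun r hr => hM hr) hU'
  have : cbNorm n t T = M := hlub.csSup_eq
  rw [this]
  exact ⟨hMmem, hM⟩
end

section
/- Let T ∈ ℝ^{n×⋯×n} be a t-tensor and let s ∈ {0, 1, …, t}. Then the supremum defining ‖T‖_cb is attained, and moreover it is attained in dimension d = n^s + n^{t−s}: there exist orthogonal matrices U_j(i) ∈ O(n^s + n^{t−s}) for i ∈ [n], j ∈ [t] such that ‖Σ_{i_1,…,i_t ∈ [n]} T_{i_1,…,i_t} U_1(i_1)⋯U_t(i_t)‖ = ‖T‖_cb. -/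
/-!
The supremum over all dimensions reduces to a supremum over the single dimension
`D = n ^ s + n ^ (t - s)`, which is attained because `O(D)` is compact (`exists_maximizer`).

For the reduction, fix orthogonal `U_j(i)` on `E = ℝ^d` and vectors `u, v`. Then
`⟨u, U₁(i₁)⋯U_t(i_t) v⟩` is the inner product of `(U₁(i₁)⋯U_s(i_s))⁻¹ u` with
`U_{s+1}(i_{s+1})⋯U_t(i_t) v`. These are at most `n ^ s` and `n ^ (t - s)` vectors, so an isometry
`φ` embeds their span into `ℝ^D`. By `exists_compression`, the images of the vectors of each kind
are again products of orthogonal transformations of `ℝ^D` applied to one vector: the spans of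
the shorter products also fit into `ℝ^D`, and an isometry between subspaces of `ℝ^D` extends to
an orthogonal transformation. Hence every value of the bilinear form in dimension `d` also occurs
in dimension `D`, with vectors of the same norms (`exists_compression_inner`,
`specNorm_le_of_bound`).
-/

open Matrix

section Compression

variable {E F : Type*} [NormedAddCommGroup E] [InnerProductSpace ℝ E]
  [NormedAddCommGroup F] [InnerProductSpace ℝ F] [FiniteDimensional ℝ F]

lemma exists_isometry_of_finrank_le (K : Submodule ℝ E) [FiniteDimensional ℝ K]
    (h : Module.finrank ℝ K ≤ Module.finrank ℝ F) : Nonempty (K →ₗᵢ[ℝ] F) := by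
  let b := stdOrthonormalBasis ℝ K
  let c := stdOrthonormalBasis ℝ F
  let f : K →ₗ[ℝ] F := b.toBasis.constr ℝ (fun i => c (Fin.castLE h i))
  have hf : ∀ i, f (b i) = c (Fin.castLE h i) := by
    intro i
    rw [← b.coe_toBasis]
    exact b.toBasis.constr_basis ℝ (fun i => c (Fin.castLE h i)) i
  refine ⟨f.isometryOfOrthonormal (v := b.toBasis) (by simp) ?_⟩
  have : (f ∘ b.toBasis) = c ∘ Fin.castLE h := by
    funext i
    simp [hf]
  rw [this]
  exact c.orthonormal.comp _ (Fin.castLE_injective h)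

/-- Two isometric copies of the same space inside `F` differ by an orthogonal transformation
of `F`. -/
lemma exists_equiv_intertwining (K : Submodule ℝ E) (f g : K →ₗᵢ[ℝ] F) :
    ∃ W : F ≃ₗᵢ[ℝ] F, ∀ x, W (f x) = g x := by
  let L : f.range →ₗᵢ[ℝ] F := g.comp f.equivRange.symm.toLinearIsometry
  refine ⟨L.extend.toLinearIsometryEquiv rfl, fun x => ?_⟩
  have h := L.extend_apply (f.equivRange x)
  have h2 : L (f.equivRange x) = g x := by simp [L]
  rw [h2] at h
  simpa using h

/-- The compression step. If `φ` embeds isometrically into `F` a space containing all vectors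
`U₁(i₁)⋯U_m(i_m) v`, these embedded vectors arise in the same way from orthogonal
transformations of `F` and a single vector of `F`. Only the spans of the shorter products
`U_k(i_k)⋯U_m(i_m) v` have to fit into `F`, which the first hypothesis
provides. -/
lemma exists_compression [FiniteDimensional ℝ E] {n : ℕ} : ∀ (m : ℕ), (∀ k ≤ m, n ^ k ≤ Module.finrank ℝ F) →
    ∀ (U : Fin m → Fin n → (E ≃ₗᵢ[ℝ] E)) (v : E) (K : Submodule ℝ E)
      (hK : ∀ i : Fin m → Fin n, (List.ofFn fun j => U j (i j)).prod v ∈ K)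
      (φ : K →ₗᵢ[ℝ] F),
    ∃ (U' : Fin m → Fin n → (F ≃ₗᵢ[ℝ] F)) (v' : F), ‖v'‖ = ‖v‖ ∧
      ∀ i : Fin m → Fin n, φ ⟨_, hK i⟩ = (List.ofFn fun j => U' j (i j)).prod v' := by
  intro m
  induction m with
  | zero =>
    intro _ U v K hK φ
    refine ⟨fun j => j.elim0, φ ⟨_, hK Fin.elim0⟩, ?_, fun i => ?_⟩
    · simp
    · simp
  | succ m ih =>
    intro hF U v K hK φ
    let w : (Fin m → Fin n) → E := fun i => (List.ofFn fun j => U j.succ (i j)).prod v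
    let K' : Submodule ℝ E := Submodule.span ℝ (Set.range w)
    have hw : ∀ i, w i ∈ K' := fun i => Submodule.subset_span ⟨i, rfl⟩
    have hdim : Module.finrank ℝ K' ≤ Module.finrank ℝ F := by
      refine (finrank_range_le_card w).trans ?_
      simpa using hF m (Nat.le_succ m)
    obtain ⟨ψ⟩ := exists_isometry_of_finrank_le (F := F) K' hdim
    have hcons : ∀ (i₀ : Fin n) (i : Fin m → Fin n),
        (List.ofFn fun j => U j ((Fin.cons i₀ i : Fin (m + 1) → Fin n) j)).prod v
          = U 0 i₀ (w i) := by
      intro i₀ i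
      simp [List.ofFn_succ, w]
    have hmap : ∀ i₀, ∀ x ∈ K', U 0 i₀ x ∈ K := by
      intro i₀ x hx
      have hle : K' ≤ K.comap (U 0 i₀).toLinearEquiv.toLinearMap := by
        refine Submodule.span_le.2 ?_
        rintro _ ⟨i, rfl⟩
        have := hK (Fin.cons i₀ i)
        rw [hcons] at this
        exact this
      exact hle hx
    let R : Fin n → (K' →ₗᵢ[ℝ] K) := fun i₀ =>
      { toLinearMap := (U 0 i₀).toLinearEquiv.toLinearMap.restrict (hmap i₀)
        norm_map' := fun x => (U 0 i₀).norm_map x }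
    have hR : ∀ i₀ x, (R i₀ x : E) = U 0 i₀ x := fun _ _ => rfl
    choose W hW using fun i₀ => exists_equiv_intertwining K' ψ (φ.comp (R i₀))
    obtain ⟨U', v', hv', hU'⟩ := ih (fun k hk => hF k (hk.trans (Nat.le_succ m)))
      (fun j => U j.succ) v K' hw ψ
    refine ⟨Fin.cons W U', v', hv', fun i => ?_⟩
    have h1 : (⟨_, hK i⟩ : K) = R (i 0) ⟨_, hw (Fin.tail i)⟩ := by
      apply Subtype.ext
      rw [hR]
      simp [List.ofFn_succ, w, Fin.tail]
    have h2 := hW (i 0) ⟨_, hw (Fin.tail i)⟩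
    rw [hU' (Fin.tail i)] at h2
    rw [h1]
    simp only [List.ofFn_succ, List.prod_cons, Fin.cons_zero, Fin.cons_succ]
    exact h2.symm

lemma prod_ofFn_inv {G : Type*} [Group G] : ∀ (m : ℕ) (g : Fin m → G),
    (List.ofFn fun j => (g j.rev)⁻¹).prod = (List.ofFn g).prod⁻¹ := by
  intro m
  induction m with
  | zero => simp
  | succ m ih =>
    intro g
    rw [List.ofFn_succ', List.ofFn_succ]
    have := ih (fun j => g j.succ)
    simp [List.concat_eq_append, Fin.rev_castSucc, this]

lemma inner_mul_apply {G : Type*} [NormedAddCommGroup G] [InnerProductSpace ℝ G]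
    (g h : G ≃ₗᵢ[ℝ] G) (x y : G) : inner ℝ x ((g * h) y) = inner ℝ (g⁻¹ x) (h y) := by
  rw [← g.inner_map_map (g⁻¹ x) (h y)]
  congr 1
  exact (g.apply_symm_apply x).symm

/-- A bilinear form `⟨u, U₁(i₁)⋯U_{s+m}(i_{s+m}) v⟩` can be reproduced on any `F` of dimension
at least `n ^ s + n ^ m`: the vectors `U_{s+1}(i_{s+1})⋯U_{s+m}(i_{s+m}) v` and
`(U₁(i₁)⋯U_s(i_s))⁻¹ u` span a space of at most that dimension. -/
lemma exists_compression_inner [FiniteDimensional ℝ E] {n s m : ℕ}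
    (hn : n ≠ 0 ∨ s + m = 0)
    (hF : n ^ s + n ^ m ≤ Module.finrank ℝ F)
    (U : Fin (s + m) → Fin n → (E ≃ₗᵢ[ℝ] E)) (u v : E) :
    ∃ (U' : Fin (s + m) → Fin n → (F ≃ₗᵢ[ℝ] F)) (u' v' : F), ‖u'‖ = ‖u‖ ∧ ‖v'‖ = ‖v‖ ∧
      ∀ i : Fin (s + m) → Fin n,
        inner ℝ u' ((List.ofFn fun j => U' j (i j)).prod v')
          = inner ℝ u ((List.ofFn fun j => U j (i j)).prod v) := by
  have hmono : ∀ k l, k ≤ l → l ≤ s + m → n ^ k ≤ n ^ l := by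
    intro k l hkl hl
    rcases hn with hn | hn
    · exact Nat.pow_le_pow_right (Nat.pos_of_ne_zero hn) hkl
    · obtain rfl : k = l := by omega
      exact le_rfl
  let A : Fin s → Fin n → (E ≃ₗᵢ[ℝ] E) := fun j i => (U (Fin.castAdd m j.rev) i)⁻¹
  let B : Fin m → Fin n → (E ≃ₗᵢ[ℝ] E) := fun j i => U (Fin.natAdd s j) i
  let wA : (Fin s → Fin n) → E := fun i => (List.ofFn fun j => A j (i j)).prod u
  let wB : (Fin m → Fin n) → E := fun i => (List.ofFn fun j => B j (i j)).prod v
  let K : Submodule ℝ E := Submodule.span ℝ (Set.range wA) ⊔ Submodule.span ℝ (Set.range wB)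
  have hA : ∀ i, wA i ∈ K := fun i =>
    (le_sup_left : _ ≤ K) (Submodule.subset_span ⟨i, rfl⟩)
  have hB : ∀ i, wB i ∈ K := fun i =>
    (le_sup_right : _ ≤ K) (Submodule.subset_span ⟨i, rfl⟩)
  have hdim : Module.finrank ℝ K ≤ Module.finrank ℝ F := by
    refine (Submodule.finrank_add_le_finrank_add_finrank _ _).trans (le_trans ?_ hF)
    refine add_le_add ?_ ?_
    · refine (finrank_range_le_card (R := ℝ) wA).trans ?_
      simp
    · refine (finrank_range_le_card (R := ℝ) wB).trans ?_
      simp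
  obtain ⟨φ⟩ := exists_isometry_of_finrank_le (F := F) K hdim
  obtain ⟨A', u', hu', hA'⟩ := exists_compression (F := F) s
    (fun k hk => by have := hmono k s hk (by omega); omega) A u K hA φ
  obtain ⟨B', v', hv', hB'⟩ := exists_compression (F := F) m
    (fun k hk => by have := hmono k m hk (by omega); omega) B v K hB φ
  refine ⟨Fin.append (fun j i => (A' j.rev i)⁻¹) B', u', v', hu', hv', fun i => ?_⟩
  let iA : Fin s → Fin n := fun j => i (Fin.castAdd m j.rev)
  let iB : Fin m → Fin n := fun j => i (Fin.natAdd s j)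
  have eA : (List.ofFn fun j => A j (iA j)).prod
      = (List.ofFn fun j : Fin s => U (Fin.castAdd m j) (i (Fin.castAdd m j))).prod⁻¹ := by
    rw [← prod_ofFn_inv]
  have eA' : (List.ofFn fun j => A' j (iA j)).prod
      = (List.ofFn fun j : Fin s => (A' j.rev (i (Fin.castAdd m j)))⁻¹).prod⁻¹ := by
    rw [← prod_ofFn_inv]
    simp [iA]
  have h1 : inner ℝ u ((List.ofFn fun j => U j (i j)).prod v) = inner ℝ (wA iA) (wB iB) := by
    rw [List.ofFn_add, List.prod_append, inner_mul_apply]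
    simp only [wA, eA]
    rfl
  have h2 := φ.inner_map_map ⟨_, hA iA⟩ ⟨_, hB iB⟩
  rw [hA', hB', eA'] at h2
  rw [h1, List.ofFn_add, List.prod_append, inner_mul_apply]
  -- `List.ofFn_add` produces `Fin.castLE`, which is `Fin.castAdd` by definition.
  change inner ℝ ((List.ofFn fun j : Fin s => Fin.append (fun j i => (A' j.rev i)⁻¹) B'
      (Fin.castAdd m j) (i (Fin.castAdd m j))).prod⁻¹ u') _ = _
  simp only [Fin.append_left, Fin.append_right]
  exact h2

end Compression

lemma exists_equiv_of_orthogonal {d : ℕ} (A : Matrix (Fin d) (Fin d) ℝ) (hA : Aᵀ * A = 1) :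
    ∃ e : EuclideanSpace ℝ (Fin d) ≃ₗᵢ[ℝ] EuclideanSpace ℝ (Fin d),
      ∀ x, toEuclideanCLM (𝕜 := ℝ) A x = e x := by
  have h1 : star A * A = 1 := by
    rw [star_eq_conjTranspose, conjTranspose_eq_transpose_of_trivial, hA]
  have h2 : A * star A = 1 := mul_eq_one_comm.1 h1
  have hu : toEuclideanCLM (𝕜 := ℝ) A ∈ unitary
      (EuclideanSpace ℝ (Fin d) →L[ℝ] EuclideanSpace ℝ (Fin d)) := by
    rw [Unitary.mem_iff, ← map_star, ← map_mul, ← map_mul, h1, h2]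
    simp
  exact ⟨Unitary.linearIsometryEquiv ⟨_, hu⟩, fun x => rfl⟩

lemma exists_orthogonal_of_equiv {d : ℕ}
    (e : EuclideanSpace ℝ (Fin d) ≃ₗᵢ[ℝ] EuclideanSpace ℝ (Fin d)) :
    ∃ A : Matrix (Fin d) (Fin d) ℝ, Aᵀ * A = 1 ∧ ∀ x, toEuclideanCLM (𝕜 := ℝ) A x = e x := by
  obtain ⟨A, hA⟩ : ∃ A, toEuclideanCLM (𝕜 := ℝ) (n := Fin d) A
      = (Unitary.linearIsometryEquiv.symm e).1 :=
    (toEuclideanCLM (𝕜 := ℝ) (n := Fin d)).surjective _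
  refine ⟨A, ?_, fun x => by rw [hA]; rfl⟩
  apply EquivLike.injective (toEuclideanCLM (𝕜 := ℝ) (n := Fin d))
  have h : star A * A = Aᵀ * A := by
    rw [star_eq_conjTranspose, conjTranspose_eq_transpose_of_trivial]
  rw [← h, map_mul, map_star, map_one, hA]
  exact (Unitary.mem_iff.1 (Unitary.linearIsometryEquiv.symm e).2).1

lemma toEuclideanCLM_prod {d : ℕ} : ∀ {t : ℕ} (A : Fin t → Matrix (Fin d) (Fin d) ℝ)
    (e : Fin t → (EuclideanSpace ℝ (Fin d) ≃ₗᵢ[ℝ] EuclideanSpace ℝ (Fin d))),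
    (∀ j x, toEuclideanCLM (𝕜 := ℝ) (A j) x = e j x) →
    ∀ x, toEuclideanCLM (𝕜 := ℝ) (List.ofFn A).prod x = (List.ofFn e).prod x := by
  intro t
  induction t with
  | zero => intro A e _ x; simp
  | succ t ih =>
    intro A e h x
    have := ih (fun j => A j.succ) (fun j => e j.succ) (fun j => h j.succ) x
    simp [List.ofFn_succ, h, this]

lemma inner_sum_prodU {n t d : ℕ} (T : (Fin t → Fin n) → ℝ)
    (U : Fin t → Fin n → Matrix (Fin d) (Fin d) ℝ)
    (e : Fin t → Fin n → (EuclideanSpace ℝ (Fin d) ≃ₗᵢ[ℝ] EuclideanSpace ℝ (Fin d)))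
    (he : ∀ j i x, toEuclideanCLM (𝕜 := ℝ) (U j i) x = e j i x)
    (u v : EuclideanSpace ℝ (Fin d)) :
    inner ℝ u (toEuclideanCLM (𝕜 := ℝ) (∑ i, T i • prodU U i) v)
      = ∑ i, T i * inner ℝ u ((List.ofFn fun j => e j (i j)).prod v) := by
  rw [map_sum, _root_.sum_apply, inner_sum]
  refine Finset.sum_congr rfl fun i _ => ?_
  rw [map_smul, _root_.smul_apply, inner_smul_right, prodU,
    toEuclideanCLM_prod _ _ (fun j => he j (i j))]

/-- A bound for the orthogonal tuples of dimension `n ^ s + n ^ m` holds in every dimension. -/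
lemma specNorm_le_of_bound {n s m : ℕ} (hn : n ≠ 0 ∨ s + m = 0)
    (T : (Fin (s + m) → Fin n) → ℝ) (D : ℕ) (hD : n ^ s + n ^ m ≤ D) (M : ℝ)
    (hM : ∀ U : Fin (s + m) → Fin n → Matrix (Fin D) (Fin D) ℝ,
      (∀ j i, (U j i)ᵀ * U j i = 1) → specNorm (∑ i, T i • prodU U i) ≤ M)
    {d : ℕ} (U : Fin (s + m) → Fin n → Matrix (Fin d) (Fin d) ℝ)
    (hU : ∀ j i, (U j i)ᵀ * U j i = 1) :
    specNorm (∑ i, T i • prodU U i) ≤ M := by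
  have hM0 : 0 ≤ M := by
    refine le_trans ?_ (hM (fun _ _ => 1) (by simp))
    exact norm_nonneg _
  choose e he using fun j i => exists_equiv_of_orthogonal (U j i) (hU j i)
  set X := toEuclideanCLM (𝕜 := ℝ) (∑ i, T i • prodU U i) with hX
  have hbil : ∀ u v, inner ℝ u (X v) ≤ M * (‖u‖ * ‖v‖) := by
    intro u v
    obtain ⟨e', u', v', hu', hv', h⟩ := exists_compression_inner
      (F := EuclideanSpace ℝ (Fin D)) hn (by simpa using hD) e u v
    choose U' hU' he' using fun j i => exists_orthogonal_of_equiv (e' j i)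
    have hb := hM U' hU'
    rw [hX, inner_sum_prodU T U e he]
    simp_rw [← h]
    rw [← inner_sum_prodU T U' e' he', ← hu', ← hv']
    refine (real_inner_le_norm _ _).trans ?_
    calc _ ≤ ‖u'‖ * (M * ‖v'‖) := by
          gcongr
          exact ContinuousLinearMap.le_of_opNorm_le _ hb v'
      _ = _ := by ring
  refine ContinuousLinearMap.opNorm_le_bound _ hM0 fun v => ?_
  have h := hbil (X v) v
  rw [real_inner_self_eq_norm_sq] at h
  rcases (norm_nonneg (X v)).eq_or_lt with h0 | h0
  · rw [← hX, ← h0]; positivity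
  · refine le_of_mul_le_mul_left ?_ h0
    calc _ = ‖X v‖ ^ 2 := by rw [sq]
      _ ≤ _ := h
      _ = _ := by ring

lemma isCompact_orthogonal (d : ℕ) :
    IsCompact {A : Matrix (Fin d) (Fin d) ℝ | Aᵀ * A = 1} := by
  have hbox : IsCompact (Set.univ.pi fun _ : Fin d => Set.univ.pi fun _ : Fin d =>
      Set.Icc (-1 : ℝ) 1) :=
    isCompact_univ_pi fun _ => isCompact_univ_pi fun _ => isCompact_Icc
  refine IsCompact.of_isClosed_subset hbox ?_ ?_
  · exact isClosed_eq (by fun_prop) continuous_const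
  · intro A hA a _ b _
    have hu : A ∈ Matrix.unitaryGroup (Fin d) ℝ := by
      rw [Matrix.mem_unitaryGroup_iff', star_eq_conjTranspose,
        conjTranspose_eq_transpose_of_trivial]
      exact hA
    have := entry_norm_bound_of_unitary hu a b
    rw [Real.norm_eq_abs, abs_le] at this
    exact this

lemma continuous_prodU {n t d : ℕ} (i : Fin t → Fin n) :
    Continuous fun U : Fin t → Fin n → Matrix (Fin d) (Fin d) ℝ => prodU U i := by
  unfold prodU
  simp_rw [List.ofFn_eq_map]
  exact continuous_list_prod _ fun j _ => by fun_prop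

lemma exists_maximizer {n t : ℕ} (T : (Fin t → Fin n) → ℝ) (D : ℕ) :
    ∃ U : Fin t → Fin n → Matrix (Fin D) (Fin D) ℝ, (∀ j i, (U j i)ᵀ * U j i = 1) ∧
      ∀ V : Fin t → Fin n → Matrix (Fin D) (Fin D) ℝ, (∀ j i, (V j i)ᵀ * V j i = 1) →
        specNorm (∑ i, T i • prodU V i) ≤ specNorm (∑ i, T i • prodU U i) := by
  have hc : IsCompact (Set.univ.pi fun _ : Fin t => Set.univ.pi fun _ : Fin n =>
      {A : Matrix (Fin D) (Fin D) ℝ | Aᵀ * A = 1}) :=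
    isCompact_univ_pi fun _ => isCompact_univ_pi fun _ => isCompact_orthogonal D
  have hsum : Continuous fun U : Fin t → Fin n → Matrix (Fin D) (Fin D) ℝ =>
      ∑ i, T i • prodU U i :=
    continuous_finsetSum _ fun i _ => by
      have := continuous_prodU (d := D) i
      fun_prop
  have hclm : Continuous (toEuclideanCLM (𝕜 := ℝ) (n := Fin D)) :=
    (toEuclideanCLM (𝕜 := ℝ) (n := Fin D)).toAlgEquiv.toLinearMap.continuous_of_finiteDimensional
  have hcont : Continuous fun U : Fin t → Fin n → Matrix (Fin D) (Fin D) ℝ =>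
      specNorm (∑ i, T i • prodU U i) := (hclm.comp hsum).norm
  obtain ⟨U, hU, hmax⟩ := hc.exists_isMaxOn
    ⟨fun _ _ => 1, fun _ _ _ _ => by simp⟩ hcont.continuousOn
  exact ⟨U, fun j i => hU j trivial i trivial, fun V hV => hmax fun j _ i _ => hV j i⟩

/-- The supremum defining `‖T‖_cb` is attained, in dimension
`d = n^s + n^{t-s}` for any `0 ≤ s ≤ t`: there exist orthogonal matrices
`U_j(i) ∈ O(n^s + n^{t-s})` achieving `‖∑_i T_i U_1(i_1)⋯U_t(i_t)‖ = ‖T‖_cb`. -/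
theorem stmt_7 (n t s : ℕ) (hs : s ≤ t) (T : (Fin t → Fin n) → ℝ) :
    ∃ U : Fin t → Fin n →
        Matrix (Fin (n ^ s + n ^ (t - s))) (Fin (n ^ s + n ^ (t - s))) ℝ,
      (∀ j i, (U j i)ᵀ * U j i = 1) ∧
      specNorm (∑ i : Fin t → Fin n, T i • prodU U i) = cbNorm n t T := by
  obtain ⟨m, rfl⟩ := Nat.exists_eq_add_of_le hs
  rw [Nat.add_sub_cancel_left]
  obtain ⟨U, hU, hmax⟩ := exists_maximizer T (n ^ s + n ^ m)
  refine ⟨U, hU, ?_⟩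
  have hub : ∀ (d : ℕ) (V : Fin (s + m) → Fin n → Matrix (Fin d) (Fin d) ℝ),
      (∀ j i, (V j i)ᵀ * V j i = 1) →
      specNorm (∑ i, T i • prodU V i) ≤ specNorm (∑ i, T i • prodU U i) := by
    intro d V hV
    by_cases hn : n ≠ 0 ∨ s + m = 0
    · exact specNorm_le_of_bound hn T _ le_rfl _ hmax V hV
    · -- Here there are no index tuples at all, so both sums vanish.
      push Not at hn
      obtain ⟨rfl, hne⟩ := hn
      have : IsEmpty (Fin (s + m) → Fin 0) := ⟨fun i => (i ⟨0, Nat.pos_of_ne_zero hne⟩).elim0⟩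
      simp [specNorm]
  have hgreatest : IsGreatest { r | ∃ d : ℕ,
      ∃ V : Fin (s + m) → Fin n → Matrix (Fin d) (Fin d) ℝ,
      (∀ j i, (V j i)ᵀ * V j i = 1) ∧ r = specNorm (∑ i, T i • prodU V i) }
      (specNorm (∑ i, T i • prodU U i)) := by
    refine ⟨⟨_, U, hU, rfl⟩, ?_⟩
    rintro _ ⟨d, V, hV, rfl⟩
    exact hub d V hV
  exact hgreatest.csSup_eq.symm
end

section
/- Let T ∈ ℝ^{n×⋯×n} be a t-tensor. Then the supremum over d ∈ ℕ and complex unitary matrices U_j(i) ∈ U(d) (for i ∈ [n], j ∈ [t]) of the operator norm ‖Σ_{i_1,…,i_t ∈ [n]} T_{i_1,…,i_t} U_1(i_1)⋯U_t(i_t)‖ equals ‖T‖_cb, the supremum of the same quantity restricted to real orthogonal matrices U_j(i) ∈ O(d). -/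
/-!
The two sets of norms are in fact equal, so the suprema agree without any discussion of
boundedness.

An orthogonal matrix is unitary when read over `ℂ`, and complexification preserves the spectral
norm (`specNormC_map_ofReal`) because a real matrix acts separately on the real and imaginary
parts of a vector. Conversely, `ℂ^d` is isometric to `ℝ^(2d)` as a real Hilbert space; replacing
each complex entry by its `2 × 2` real matrix gives an `ℝ`-linear ring homomorphism `realify`
which turns adjoints into transposes and preserves the spectral norm (`specNorm_realify`).
-/

open Matrix

/-- The ordered product of complex matrices `U 0 (i 0) * ⋯ * U (t-1) (i (t-1))`. -/
noncomputable def prodUC {n t d : ℕ} (U : Fin t → Fin n → Matrix (Fin d) (Fin d) ℂ)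
    (i : Fin t → Fin n) : Matrix (Fin d) (Fin d) ℂ :=
  (List.ofFn fun j => U j (i j)).prod

/-- The spectral (operator) norm of a complex `d × d` matrix. -/
noncomputable def specNormC {d : ℕ} (A : Matrix (Fin d) (Fin d) ℂ) : ℝ :=
  ‖(Matrix.toEuclideanCLM (𝕜 := ℂ) A)‖

/-- The ring homomorphism replacing each complex entry `a + bi` of a `d × d` matrix by the real
block `!![a, -b; b, a]`, the resulting indices `Fin d × Fin 2` being enumerated by
`finProdFinEquiv`. -/
noncomputable def realify (d : ℕ) :
    Matrix (Fin d) (Fin d) ℂ →+* Matrix (Fin (d * 2)) (Fin (d * 2)) ℝ :=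
  ((Matrix.reindexRingEquiv ℝ (finProdFinEquiv (m := d) (n := 2))).toRingHom.comp
    (Matrix.compRingEquiv (Fin d) (Fin 2) ℝ).toRingHom).comp
    (Algebra.leftMulMatrix Complex.basisOneI).toRingHom.mapMatrix

lemma realify_apply {d : ℕ} (A : Matrix (Fin d) (Fin d) ℂ) (i j : Fin d) (k l : Fin 2) :
    realify d A (finProdFinEquiv (i, k)) (finProdFinEquiv (j, l)) =
      !![(A i j).re, -(A i j).im; (A i j).im, (A i j).re] k l := by
  simp [realify, Matrix.compRingEquiv, Algebra.leftMulMatrix_complex]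

lemma realify_smul {d : ℕ} (r : ℝ) (A : Matrix (Fin d) (Fin d) ℂ) :
    realify d ((r : ℂ) • A) = r • realify d A := by
  ext p q
  obtain ⟨⟨i, k⟩, rfl⟩ := finProdFinEquiv.surjective p
  obtain ⟨⟨j, l⟩, rfl⟩ := finProdFinEquiv.surjective q
  rw [Matrix.smul_apply, realify_apply, realify_apply]
  fin_cases k <;> fin_cases l <;> simp

lemma realify_star {d : ℕ} (A : Matrix (Fin d) (Fin d) ℂ) :
    realify d (star A) = (realify d A)ᵀ := by
  ext p q
  obtain ⟨⟨i, k⟩, rfl⟩ := finProdFinEquiv.surjective p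
  obtain ⟨⟨j, l⟩, rfl⟩ := finProdFinEquiv.surjective q
  rw [Matrix.transpose_apply, realify_apply, realify_apply]
  fin_cases k <;> fin_cases l <;> simp [Matrix.star_apply]

/-- The identification `ℂ^d → ℝ^(2d)` listing the real and imaginary parts of the coordinates. -/
noncomputable def realVec {d : ℕ} (x : EuclideanSpace ℂ (Fin d)) :
    EuclideanSpace ℝ (Fin (d * 2)) :=
  WithLp.toLp 2 fun p => ![(x (finProdFinEquiv.symm p).1).re, (x (finProdFinEquiv.symm p).1).im]
    (finProdFinEquiv.symm p).2

lemma realVec_apply {d : ℕ} (x : EuclideanSpace ℂ (Fin d)) (i : Fin d) (k : Fin 2) :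
    realVec x (finProdFinEquiv (i, k)) = ![(x i).re, (x i).im] k := by
  simp only [realVec, Equiv.symm_apply_apply]

lemma realVec_surjective {d : ℕ} :
    Function.Surjective (realVec : EuclideanSpace ℂ (Fin d) → _) := by
  intro y
  refine ⟨WithLp.toLp 2 fun i => ⟨y (finProdFinEquiv (i, 0)), y (finProdFinEquiv (i, 1))⟩, ?_⟩
  ext p
  obtain ⟨⟨i, k⟩, rfl⟩ := finProdFinEquiv.surjective p
  rw [realVec_apply]
  fin_cases k <;> simp

lemma norm_realVec {d : ℕ} (x : EuclideanSpace ℂ (Fin d)) : ‖realVec x‖ = ‖x‖ := by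
  rw [EuclideanSpace.norm_eq, EuclideanSpace.norm_eq, ← finProdFinEquiv.sum_comp,
    Fintype.sum_prod_type]
  congr 1
  refine Finset.sum_congr rfl fun i _ => ?_
  simp only [realVec_apply, Fin.sum_univ_two, ← Complex.normSq_eq_norm_sq, Complex.normSq_apply]
  simp [pow_two]

lemma realVec_toEuclideanCLM {d : ℕ} (A : Matrix (Fin d) (Fin d) ℂ)
    (x : EuclideanSpace ℂ (Fin d)) :
    Matrix.toEuclideanCLM (𝕜 := ℝ) (realify d A) (realVec x) =
      realVec (Matrix.toEuclideanCLM (𝕜 := ℂ) A x) := by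
  ext p
  obtain ⟨⟨i, k⟩, rfl⟩ := finProdFinEquiv.surjective p
  rw [realVec_apply]
  simp only [Matrix.ofLp_toEuclideanCLM, Matrix.mulVec, dotProduct]
  rw [← finProdFinEquiv.sum_comp, Fintype.sum_prod_type]
  simp only [realify_apply, realVec_apply, Fin.sum_univ_two]
  fin_cases k <;> simp [sub_eq_add_neg, add_comm]

lemma specNorm_realify {d : ℕ} (A : Matrix (Fin d) (Fin d) ℂ) :
    specNorm (realify d A) = specNormC A := by
  apply le_antisymm
  · refine ContinuousLinearMap.opNorm_le_bound _ (norm_nonneg _) fun y => ?_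
    obtain ⟨x, rfl⟩ := realVec_surjective y
    rw [realVec_toEuclideanCLM, norm_realVec, norm_realVec]
    exact ContinuousLinearMap.le_opNorm _ _
  · refine ContinuousLinearMap.opNorm_le_bound _ (norm_nonneg _) fun x => ?_
    rw [← norm_realVec, ← realVec_toEuclideanCLM, ← norm_realVec x]
    exact ContinuousLinearMap.le_opNorm _ _

/-- The squared norm of a complex vector splits into real and imaginary parts. -/
lemma norm_sq_re_im {d : ℕ} (z : EuclideanSpace ℂ (Fin d)) :
    ‖z‖ ^ 2 = ‖(WithLp.toLp 2 fun i => (z i).re : EuclideanSpace ℝ (Fin d))‖ ^ 2 +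
      ‖(WithLp.toLp 2 fun i => (z i).im : EuclideanSpace ℝ (Fin d))‖ ^ 2 := by
  simp only [EuclideanSpace.norm_sq_eq, ← Finset.sum_add_distrib, ← Complex.normSq_eq_norm_sq,
    Complex.normSq_apply]
  simp [pow_two]

lemma specNormC_map_ofReal {d : ℕ} (A : Matrix (Fin d) (Fin d) ℝ) :
    specNormC (Complex.ofRealHom.mapMatrix A) = specNorm A := by
  apply le_antisymm
  · refine ContinuousLinearMap.opNorm_le_bound _ (norm_nonneg _) fun z => ?_
    refine le_of_sq_le_sq ?_ (mul_nonneg (norm_nonneg _) (norm_nonneg _))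
    have hre : (WithLp.toLp 2 fun i => ((Matrix.toEuclideanCLM (𝕜 := ℂ)
        (Complex.ofRealHom.mapMatrix A) z) i).re : EuclideanSpace ℝ (Fin d)) =
        Matrix.toEuclideanCLM (𝕜 := ℝ) A (WithLp.toLp 2 fun i => (z i).re) := by
      ext i
      simp [Matrix.ofLp_toEuclideanCLM, Matrix.mulVec, dotProduct]
    have him : (WithLp.toLp 2 fun i => ((Matrix.toEuclideanCLM (𝕜 := ℂ)
        (Complex.ofRealHom.mapMatrix A) z) i).im : EuclideanSpace ℝ (Fin d)) =
        Matrix.toEuclideanCLM (𝕜 := ℝ) A (WithLp.toLp 2 fun i => (z i).im) := by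
      ext i
      simp [Matrix.ofLp_toEuclideanCLM, Matrix.mulVec, dotProduct]
    rw [norm_sq_re_im, hre, him, mul_pow, norm_sq_re_im z, mul_add, ← mul_pow, ← mul_pow]
    unfold specNorm
    gcongr <;> exact ContinuousLinearMap.le_opNorm _ _
  · refine ContinuousLinearMap.opNorm_le_bound _ (norm_nonneg _) fun x => ?_
    have hnorm (y : EuclideanSpace ℝ (Fin d)) :
        ‖(WithLp.toLp 2 fun i => (y i : ℂ) : EuclideanSpace ℂ (Fin d))‖ = ‖y‖ := by
      simp [EuclideanSpace.norm_eq]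
    have hmap : (WithLp.toLp 2 fun i => ((Matrix.toEuclideanCLM (𝕜 := ℝ) A x) i : ℂ) :
        EuclideanSpace ℂ (Fin d)) = Matrix.toEuclideanCLM (𝕜 := ℂ)
        (Complex.ofRealHom.mapMatrix A) (WithLp.toLp 2 fun i => (x i : ℂ)) := by
      ext i
      simp [Matrix.ofLp_toEuclideanCLM, Matrix.mulVec, dotProduct]
    rw [← hnorm, hmap, ← hnorm x]
    exact ContinuousLinearMap.le_opNorm _ _

/-- The supremum over complex unitary matrices of
`‖∑_i T_i U_1(i_1)⋯U_t(i_t)‖` equals `‖T‖_cb` (the supremum over real orthogonal matrices). -/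
theorem stmt_11 (n t : ℕ) (T : (Fin t → Fin n) → ℝ) :
    sSup { r | ∃ d : ℕ, ∃ U : Fin t → Fin n → Matrix (Fin d) (Fin d) ℂ,
      (∀ j i, star (U j i) * U j i = 1) ∧
      r = specNormC (∑ i : Fin t → Fin n, (T i : ℂ) • prodUC U i) } = cbNorm n t T := by
  unfold cbNorm
  congr 1
  ext r
  constructor
  · rintro ⟨d, U, hU, rfl⟩
    refine ⟨d * 2, fun j i => realify d (U j i), fun j i => ?_, ?_⟩
    · rw [← realify_star, ← map_mul, hU, map_one]
    · rw [← specNorm_realify, map_sum]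
      simp only [realify_smul, prodU, prodUC, map_list_prod, List.map_ofFn, Function.comp_def]
  · rintro ⟨d, U, hU, rfl⟩
    refine ⟨d, fun j i => Complex.ofRealHom.mapMatrix (U j i), fun j i => ?_, ?_⟩
    · have hstar : star (Complex.ofRealHom.mapMatrix (U j i)) =
          Complex.ofRealHom.mapMatrix (U j i)ᵀ := by
        ext a b
        simp [Matrix.star_apply]
      rw [hstar, ← map_mul, hU, map_one]
    · have hsmul (c : ℝ) (A : Matrix (Fin d) (Fin d) ℝ) :
          Complex.ofRealHom.mapMatrix (c • A) = (c : ℂ) • Complex.ofRealHom.mapMatrix A := by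
        ext a b
        simp
      rw [← specNormC_map_ofReal, map_sum]
      simp only [hsmul, prodU, prodUC, map_list_prod, List.map_ofFn, Function.comp_def]
end
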